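/- In the independent interference case t(α,u) = α with K ≥ K_low, let (a°, c°) be an optimal pair and let 0 ≤ u_bot ≤ u_top ≤ v be the constants from the allocation threshold theorem. Defining ψ(α) := u_top if α ≥ v; ψ(α) := α − (v − u_top) if u_bot + v − u_top < α < v; and ψ(α) := 0 if α ≤ u_bot + v − u_top, one has, for almost every (α,u): c°(α,u) = 1 if u_bot < u < ψ(α), and c°(α,u) = 0 otherwise. -/

import Mathlib

open MeasureTheory Set

noncomputable section

namespace Spectrum

/-- The CDF associated with a density via `F x = ∫ s in 0..x, f s`. -/
def CDF (f : ℝ → ℝ) (x : ℝ) : ℝ := ∫ s in (0:ℝ)..x, f s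

/-- `r u = (1 - G u) / g u - u`. -/
def rFun (g : ℝ → ℝ) (u : ℝ) : ℝ := (1 - CDF g u) / g u - u

/-- The lower threshold `K_low` on the cost of inspection. -/
def Klow (f g : ℝ → ℝ) (αstar : ℝ → ℝ) (v : ℝ) : ℝ :=
  (∫ u in (0:ℝ)..v, (1 - CDF f (αstar u)) * (1 - CDF g u - u * g u)) /
  (∫ u in (0:ℝ)..v, (1 - CDF f (αstar u)) * g u)

/-- `f` is a continuous, strictly positive probability density on `[0, b]`. -/
structure IsDensityOn (f : ℝ → ℝ) (b : ℝ) : Prop where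
  cont : ContinuousOn f (Icc 0 b)
  pos : ∀ x ∈ Icc (0:ℝ) b, 0 < f x
  supp : ∀ x, x ∉ Icc (0:ℝ) b → f x = 0
  int_one : (∫ x in (0:ℝ)..b, f x) = 1

/-- The regulator's objective. -/
def J (abar ubar v : ℝ) (f g : ℝ → ℝ) (t : ℝ → ℝ → ℝ) (a : ℝ → ℝ → ℝ) : ℝ :=
  ∫ u in (0:ℝ)..ubar, ∫ α in (0:ℝ)..abar, f α * g u * (min v (t α u) - u) * a α u

/-- Feasibility of an allocation/inspection pair for the regulator's problem. -/
structure Feasible (abar ubar K : ℝ) (f g : ℝ → ℝ) (a c : ℝ → ℝ → ℝ) : Prop where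
  meas_a : Measurable (Function.uncurry a)
  meas_c : Measurable (Function.uncurry c)
  mem_a : ∀ α u, a α u ∈ Icc (0:ℝ) 1
  mem_c : ∀ α u, c α u ∈ Icc (0:ℝ) 1
  budget : (∫ u in (0:ℝ)..ubar, ∫ α in (0:ℝ)..abar, f α * g u * rFun g u * a α u)
      = K * ∫ u in (0:ℝ)..ubar, ∫ α in (0:ℝ)..abar, f α * g u * c α u
  ic : ∀ α u, a α u * (1 - c α u) ≤ a 0 u
  inspect : ∀ α u, c α u ≤ a α u
  u_mono : ∀ α u u', u' ≤ u → a α u ≤ a α u'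
  α_mono0 : ∀ α u, a 0 u ≤ a α u

/-- Optimality for the regulator's problem. -/
def Optimal (abar ubar v K : ℝ) (f g : ℝ → ℝ) (t : ℝ → ℝ → ℝ) (a c : ℝ → ℝ → ℝ) : Prop :=
  Feasible abar ubar K f g a c ∧
  ∀ a' c' : ℝ → ℝ → ℝ, Feasible abar ubar K f g a' c' →
    J abar ubar v f g t a' ≤ J abar ubar v f g t a

/-- The interference is `t(α,u) = α` (independent case, with `α*(u) = u`)
or `t(α,u) = α·u` (power case, with `α*(u) = 1`). -/
def InterferenceSpec (t : ℝ → ℝ → ℝ) (αstar : ℝ → ℝ) : Prop :=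
  ((∀ α u, t α u = α) ∧ (∀ u, αstar u = u)) ∨
  ((∀ α u, t α u = α * u) ∧ (∀ u, αstar u = 1))

/-- The allocation threshold in the independent-interference case. -/
def phiInd (v ubot utop : ℝ) (α : ℝ) : ℝ :=
  if v ≤ α then utop
  else if ubot + v - utop < α then α - (v - utop)
  else ubot

/-- The inspection threshold in the independent-interference case. -/
def psiInd (v ubot utop : ℝ) (α : ℝ) : ℝ :=
  if v ≤ α then utop
  else if ubot + v - utop < α then α - (v - utop)
  else 0

/-! Under incentive compatibility an allocation forces at least the inspection `a(α,u) - a(0,u)`,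
so it remains to see that the optimum inspects no more than this, i.e. that its allocation does not
run a budget surplus under the least inspection it forces. If it did, move its threshold linearly
towards the efficient threshold `min v α`. The efficient allocation runs no surplus, because
`K ≥ K_low`, so by the intermediate value theorem some threshold on the way balances the budget.
The balanced allocation is feasible and at least as good pointwise, so by optimality it agrees with
the original one almost everywhere. The original then forces no less inspection than the balanced
one, so its surplus is at most zero: a contradiction. As `K_low > 0`, inspection beyond the forced
one would push the budget below balance. -/

namespace IsDensityOn

variable {f : ℝ → ℝ} {b : ℝ}

lemma nonneg (hf : IsDensityOn f b) (x : ℝ) : 0 ≤ f x := by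
  by_cases hx : x ∈ Icc 0 b
  · exact (hf.pos x hx).le
  · exact (hf.supp x hx).ge

lemma pos_iff (hf : IsDensityOn f b) {x : ℝ} : 0 < f x ↔ x ∈ Icc 0 b :=
  ⟨fun h ↦ by_contra fun hx ↦ h.ne' (hf.supp x hx), hf.pos x⟩

lemma right_pos (hf : IsDensityOn f b) : 0 < b := by
  by_contra! hb
  have hzero : ∫ x in (0 : ℝ)..b, f x = 0 := by
    rw [intervalIntegral.integral_of_ge hb, integral_Ioc_eq_integral_Ioo, neg_eq_zero]
    exact setIntegral_eq_zero_of_forall_eq_zero fun x hx ↦ hf.supp x fun h ↦ hx.2.not_ge h.1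
  exact one_ne_zero (hf.int_one.symm.trans hzero)

lemma measurable (hf : IsDensityOn f b) : Measurable f := by
  classical
  have h : f = (Icc 0 b).piecewise f 0 := by
    ext x
    by_cases hx : x ∈ Icc 0 b
    · rw [piecewise_eq_of_mem _ _ _ hx]
    · rw [piecewise_eq_of_notMem _ _ _ hx, hf.supp x hx, Pi.zero_apply]
  rw [h]
  exact hf.cont.measurable_piecewise continuousOn_const measurableSet_Icc

lemma integrable (hf : IsDensityOn f b) : Integrable f :=
  (integrableOn_iff_integrable_of_support_subset fun x hx ↦
    by_contra fun h ↦ hx (hf.supp x h)).1 (hf.cont.integrableOn_compact isCompact_Icc)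

lemma intervalIntegral_mul (hf : IsDensityOn f b) (h : ℝ → ℝ) :
    ∫ x in (0 : ℝ)..b, f x * h x = ∫ x, f x * h x := by
  rw [intervalIntegral.integral_of_le hf.right_pos.le, ← integral_Icc_eq_integral_Ioc,
    setIntegral_eq_integral_of_forall_compl_eq_zero fun x hx ↦ by rw [hf.supp x hx, zero_mul]]

lemma integral_Ioi (hf : IsDensityOn f b) (x : ℝ) : ∫ s in Ioi x, f s = 1 - CDF f x := by
  have hsplit (y : ℝ) : (∫ s in (0 : ℝ)..y, f s) + ∫ s in Ioi y, f s = ∫ s in Ioi 0, f s :=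
    intervalIntegral.integral_interval_add_Ioi hf.integrable.integrableOn
      hf.integrable.integrableOn
  have htail : ∫ s in Ioi b, f s = 0 :=
    setIntegral_eq_zero_of_forall_eq_zero fun s hs ↦ hf.supp s fun h ↦ hs.not_ge h.2
  have hb := hsplit b
  rw [hf.int_one, htail, add_zero] at hb
  rw [hb, CDF, ← hsplit x, add_sub_cancel_left]

lemma cdf_le_one (hf : IsDensityOn f b) (x : ℝ) : CDF f x ≤ 1 :=
  sub_nonneg.1 <| hf.integral_Ioi x ▸ integral_nonneg hf.nonneg

lemma cdf_lt_one (hf : IsDensityOn f b) {x : ℝ} (hx : x ∈ Ico 0 b) : CDF f x < 1 := by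
  have hsplit : CDF f x + ∫ s in x..b, f s = 1 :=
    (intervalIntegral.integral_add_adjacent_intervals hf.integrable.intervalIntegrable
      hf.integrable.intervalIntegrable).trans hf.int_one
  have hpos : 0 < ∫ s in x..b, f s :=
    intervalIntegral.intervalIntegral_pos_of_pos_on hf.integrable.intervalIntegrable
      (fun s hs ↦ hf.pos s ⟨hx.1.trans hs.1.le, hs.2.le⟩) hx.2
  linarith

lemma cdf_eq_one_of_le (hf : IsDensityOn f b) {x : ℝ} (hx : b ≤ x) : CDF f x = 1 := by
  have htail : ∫ s in Ioi x, f s = 0 := setIntegral_eq_zero_of_forall_eq_zero fun s hs ↦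
    hf.supp s fun h ↦ (hx.trans_lt hs).not_ge h.2
  linarith [hf.integral_Ioi x]

lemma continuous_cdf (hf : IsDensityOn f b) : Continuous (CDF f) :=
  intervalIntegral.continuous_primitive (fun _ _ ↦ hf.integrable.intervalIntegrable) 0

lemma continuousAt (hf : IsDensityOn f b) {x : ℝ} (hx : x ∉ ({0, b} : Set ℝ)) :
    ContinuousAt f x := by
  by_cases hmem : x ∈ Icc 0 b
  · obtain ⟨h0, hb⟩ := not_or.1 hx
    exact hf.cont.continuousAt
      (Icc_mem_nhds (lt_of_le_of_ne hmem.1 (Ne.symm h0)) (lt_of_le_of_ne hmem.2 hb))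
  · have hzero : f =ᶠ[nhds x] 0 := Filter.eventually_of_mem
      (isClosed_Icc.isOpen_compl.mem_nhds hmem) hf.supp
    exact continuousAt_const.congr hzero.symm

lemma hasDerivAt_cdf (hf : IsDensityOn f b) {x : ℝ} (hx : x ∉ ({0, b} : Set ℝ)) :
    HasDerivAt (CDF f) (f x) x :=
  intervalIntegral.integral_hasDerivAt_right hf.integrable.intervalIntegrable
    hf.measurable.stronglyMeasurable.stronglyMeasurableAtFilter (hf.continuousAt hx)

lemma mul_rFun (hf : IsDensityOn f b) {u : ℝ} (hu : 0 ≤ u) :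
    f u * rFun f u = 1 - CDF f u - u * f u := by
  rcases le_or_gt u b with hub | hub
  · have := (hf.pos u ⟨hu, hub⟩).ne'
    rw [rFun]
    field_simp
  · rw [hf.supp u fun h ↦ hub.not_ge h.2, hf.cdf_eq_one_of_le hub.le]
    ring

lemma continuousOn_rFun (hf : IsDensityOn f b) : ContinuousOn (rFun f) (Icc 0 b) :=
  ((continuousOn_const.sub hf.continuous_cdf.continuousOn).div hf.cont
    fun x hx ↦ (hf.pos x hx).ne').sub continuousOn_id

end IsDensityOn

section LowerThreshold

variable {f g : ℝ → ℝ} {abar ubar v K : ℝ}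

lemma intervalIntegrable_marginalRevenue (hf : IsDensityOn f abar) (hg : IsDensityOn g ubar)
    (x y : ℝ) :
    IntervalIntegrable (fun u ↦ (1 - CDF f u) * (1 - CDF g u - u * g u)) volume x y := by
  have := hf.continuous_cdf
  have := hg.continuous_cdf
  refine IntervalIntegrable.continuousOn_mul (.sub ?_ ?_) (by fun_prop)
  · exact Continuous.intervalIntegrable (by fun_prop) _ _
  · exact hg.integrable.intervalIntegrable.continuousOn_mul continuousOn_id

lemma intervalIntegrable_one_sub_cdf_mul (hf : IsDensityOn f abar) (hg : IsDensityOn g ubar)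
    (x y : ℝ) : IntervalIntegrable (fun u ↦ (1 - CDF f u) * g u) volume x y := by
  have := hf.continuous_cdf
  exact hg.integrable.intervalIntegrable.continuousOn_mul (by fun_prop)

lemma intervalIntegral_pos_of_nonneg_of_pos_on {h : ℝ → ℝ} {a m b : ℝ}
    (hi : IntervalIntegrable h volume a b) (hnonneg : ∀ x ∈ Ioc a b, 0 ≤ h x)
    (ham : a < m) (hmb : m ≤ b) (hpos : ∀ x ∈ Ioo a m, 0 < h x) : 0 < ∫ x in a..b, h x :=
  calc
    0 < ∫ x in a..m, h x := intervalIntegral.intervalIntegral_pos_of_pos_on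
      (hi.mono_set (uIcc_subset_uIcc_left ⟨by simp [ham.le.trans hmb, ham.le], by simp [hmb]⟩))
      hpos ham
    _ ≤ ∫ x in a..b, h x := intervalIntegral.integral_mono_interval le_rfl ham.le hmb
      ((ae_restrict_mem measurableSet_Ioc).mono hnonneg) hi

lemma integral_one_sub_cdf_mul_pos (hf : IsDensityOn f abar) (hg : IsDensityOn g ubar)
    (hv : 0 < v) : 0 < ∫ u in (0 : ℝ)..v, (1 - CDF f u) * g u := by
  refine intervalIntegral_pos_of_nonneg_of_pos_on (intervalIntegrable_one_sub_cdf_mul hf hg 0 v)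
    (fun u _ ↦ mul_nonneg (sub_nonneg.2 (hf.cdf_le_one u)) (hg.nonneg u))
    (lt_min hv (lt_min hf.right_pos hg.right_pos)) (min_le_left _ _) fun u hu ↦ ?_
  simp only [mem_Ioo, lt_min_iff] at hu
  obtain ⟨hu0, -, hua, huu⟩ := hu
  exact mul_pos (sub_pos.2 (hf.cdf_lt_one ⟨hu0.le, hua⟩)) (hg.pos u ⟨hu0.le, huu.le⟩)

lemma integral_mul_revenue_pos (hf : IsDensityOn f abar) (hg : IsDensityOn g ubar)
    (hv : 0 < v) : 0 < ∫ u in (0 : ℝ)..v, f u * (u * (1 - CDF g u)) := by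
  have := hg.continuous_cdf
  refine intervalIntegral_pos_of_nonneg_of_pos_on
    (hf.integrable.intervalIntegrable.mul_continuousOn (by fun_prop))
    (fun u hu ↦ mul_nonneg (hf.nonneg u) (mul_nonneg hu.1.le (sub_nonneg.2 (hg.cdf_le_one u))))
    (lt_min hv (lt_min hf.right_pos hg.right_pos)) (min_le_left _ _) fun u hu ↦ ?_
  simp only [mem_Ioo, lt_min_iff] at hu
  obtain ⟨hu0, -, hua, huu⟩ := hu
  exact mul_pos (hf.pos u ⟨hu0.le, hua.le⟩)
    (mul_pos hu0 (sub_pos.2 (hg.cdf_lt_one ⟨hu0.le, huu⟩)))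

lemma integral_marginalRevenue (hf : IsDensityOn f abar) (hg : IsDensityOn g ubar) :
    ∫ u in (0 : ℝ)..v, (1 - CDF f u) * (1 - CDF g u - u * g u) =
      (1 - CDF f v) * (v * (1 - CDF g v)) + ∫ u in (0 : ℝ)..v, f u * (u * (1 - CDF g u)) := by
  have := hf.continuous_cdf
  have := hg.continuous_cdf
  have hderiv (x : ℝ) (hx : x ∉ ({0, abar} ∪ {0, ubar} : Set ℝ)) :
      HasDerivAt (fun u ↦ (1 - CDF f u) * (u * (1 - CDF g u)))
        ((1 - CDF f x) * (1 - CDF g x - x * g x) - f x * (x * (1 - CDF g x))) x := by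
    rw [mem_union, not_or] at hx
    have hF := (hf.hasDerivAt_cdf hx.1).const_sub 1
    have hG := (hg.hasDerivAt_cdf hx.2).const_sub 1
    exact (hF.mul ((hasDerivAt_id' x).mul hG)).congr_deriv (by simp only [Pi.mul_apply]; ring)
  have hi : IntervalIntegrable (fun u ↦ f u * (u * (1 - CDF g u))) volume 0 v :=
    hf.integrable.intervalIntegrable.mul_continuousOn (by fun_prop)
  have hN := intervalIntegrable_marginalRevenue hf hg 0 v
  have hftc := integral_eq_of_hasDerivAt_off_countable _ _
    (((finite_singleton _).insert _).union ((finite_singleton _).insert _)).countable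
    (by fun_prop) (fun x hx ↦ hderiv x hx.2) (hN.sub hi)
  rw [intervalIntegral.integral_sub hN hi] at hftc
  linarith

lemma integral_marginalRevenue_pos (hf : IsDensityOn f abar) (hg : IsDensityOn g ubar)
    (hv : 0 < v) : 0 < ∫ u in (0 : ℝ)..v, (1 - CDF f u) * (1 - CDF g u - u * g u) := by
  rw [integral_marginalRevenue hf hg]
  exact add_pos_of_nonneg_of_pos (mul_nonneg (sub_nonneg.2 (hf.cdf_le_one v))
    (mul_nonneg hv.le (sub_nonneg.2 (hg.cdf_le_one v)))) (integral_mul_revenue_pos hf hg hv)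

lemma Klow_pos (hf : IsDensityOn f abar) (hg : IsDensityOn g ubar) (hv : 0 < v) :
    0 < Klow f g (fun u ↦ u) v :=
  div_pos (integral_marginalRevenue_pos hf hg hv) (integral_one_sub_cdf_mul_pos hf hg hv)

lemma Klow_le_iff (hf : IsDensityOn f abar) (hg : IsDensityOn g ubar) (hv : 0 < v) :
    Klow f g (fun u ↦ u) v ≤ K ↔
      ∫ u in (0 : ℝ)..v, (1 - CDF f u) * (1 - CDF g u - u * g u) ≤
        K * ∫ u in (0 : ℝ)..v, (1 - CDF f u) * g u :=
  div_le_iff₀ (integral_one_sub_cdf_mul_pos hf hg hv)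

end LowerThreshold

section TypeMeasure

/-- The joint law of independent types `(α, u)` with densities `f` and `g`. -/
def typeMeasure (f g : ℝ → ℝ) : Measure (ℝ × ℝ) :=
  volume.withDensity fun p ↦ ENNReal.ofReal (f p.1 * g p.2)

variable {f g : ℝ → ℝ} {abar ubar : ℝ}

lemma measurable_jointDensity (hf : IsDensityOn f abar) (hg : IsDensityOn g ubar) :
    Measurable fun p : ℝ × ℝ ↦ ENNReal.ofReal (f p.1 * g p.2) :=
  ((hf.measurable.comp measurable_fst).mul (hg.measurable.comp measurable_snd)).ennreal_ofReal

lemma jointDensity_pos_iff (hf : IsDensityOn f abar) (hg : IsDensityOn g ubar) (p : ℝ × ℝ) :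
    0 < f p.1 * g p.2 ↔ p ∈ Icc 0 abar ×ˢ Icc 0 ubar := by
  rw [mem_prod, ← hf.pos_iff, ← hg.pos_iff]
  exact ⟨fun h ↦ ⟨pos_of_mul_pos_left h (hg.nonneg _), pos_of_mul_pos_right h (hf.nonneg _)⟩,
    fun h ↦ mul_pos h.1 h.2⟩

lemma ae_typeMeasure_iff (hf : IsDensityOn f abar) (hg : IsDensityOn g ubar)
    {P : ℝ × ℝ → Prop} :
    (∀ᵐ p ∂typeMeasure f g, P p) ↔ ∀ᵐ p : ℝ × ℝ, p ∈ Icc 0 abar ×ˢ Icc 0 ubar → P p := by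
  simp only [typeMeasure, ae_withDensity_iff (measurable_jointDensity hf hg), ne_eq,
    ENNReal.ofReal_eq_zero, not_le, jointDensity_pos_iff hf hg]

lemma ae_typeMeasure_mem (hf : IsDensityOn f abar) (hg : IsDensityOn g ubar) :
    ∀ᵐ p ∂typeMeasure f g, p ∈ Icc 0 abar ×ˢ Icc 0 ubar :=
  (ae_typeMeasure_iff hf hg).2 (.of_forall fun _ ↦ id)

lemma ae_snd_ne_comp_fst {Φ : ℝ → ℝ} (hΦ : Measurable Φ) :
    ∀ᵐ p ∂typeMeasure f g, p.2 ≠ Φ p.1 := by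
  have hgraph : MeasurableSet {p : ℝ × ℝ | p.2 = Φ p.1} :=
    measurableSet_eq_fun measurable_snd (hΦ.comp measurable_fst)
  refine (withDensity_absolutelyContinuous _ _).ae_le (ae_iff.2 ?_)
  simp only [ne_eq, not_not]
  rw [Measure.volume_eq_prod, Measure.measure_prod_null hgraph]
  exact .of_forall fun x ↦ measure_singleton (Φ x)

lemma integrable_typeMeasure_iff (hf : IsDensityOn f abar) (hg : IsDensityOn g ubar)
    {h : ℝ × ℝ → ℝ} :
    Integrable h (typeMeasure f g) ↔ Integrable fun p ↦ f p.1 * g p.2 * h p := by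
  rw [typeMeasure, integrable_withDensity_iff_integrable_smul' (measurable_jointDensity hf hg)
    (.of_forall fun _ ↦ ENNReal.ofReal_lt_top)]
  simp only [ENNReal.toReal_ofReal (mul_nonneg (hf.nonneg _) (hg.nonneg _)), smul_eq_mul]

lemma integral_typeMeasure (hf : IsDensityOn f abar) (hg : IsDensityOn g ubar)
    {h : ℝ × ℝ → ℝ} (hh : Integrable h (typeMeasure f g)) :
    ∫ p, h p ∂typeMeasure f g = ∫ u, ∫ α, f α * g u * h (α, u) := by
  rw [integrable_typeMeasure_iff hf hg, Measure.volume_eq_prod] at hh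
  rw [← integral_prod_symm _ hh, ← Measure.volume_eq_prod, typeMeasure,
    integral_withDensity_eq_integral_toReal_smul (measurable_jointDensity hf hg)
      (.of_forall fun _ ↦ ENNReal.ofReal_lt_top)]
  simp only [ENNReal.toReal_ofReal (mul_nonneg (hf.nonneg _) (hg.nonneg _)), smul_eq_mul]

lemma intervalIntegral_eq_integral_typeMeasure (hf : IsDensityOn f abar)
    (hg : IsDensityOn g ubar) {h : ℝ × ℝ → ℝ} (hh : Integrable h (typeMeasure f g)) :
    ∫ u in (0 : ℝ)..ubar, ∫ α in (0 : ℝ)..abar, f α * g u * h (α, u) =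
      ∫ p, h p ∂typeMeasure f g := by
  rw [integral_typeMeasure hf hg hh]
  have hfactor (α u : ℝ) : f α * g u * h (α, u) = g u * (f α * h (α, u)) := by ring
  simp only [hfactor, intervalIntegral.integral_const_mul, integral_const_mul,
    hf.intervalIntegral_mul, hg.intervalIntegral_mul]

lemma integrable_typeMeasure_of_continuousOn (hf : IsDensityOn f abar)
    (hg : IsDensityOn g ubar) {h : ℝ × ℝ → ℝ}
    (hh : ContinuousOn h (Icc 0 abar ×ˢ Icc 0 ubar)) : Integrable h (typeMeasure f g) := by
  have hbox : ContinuousOn (fun p ↦ f p.1 * g p.2 * h p) (Icc 0 abar ×ˢ Icc 0 ubar) :=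
    ((hf.cont.comp continuousOn_fst fun _ hp ↦ hp.1).mul
      (hg.cont.comp continuousOn_snd fun _ hp ↦ hp.2)).mul hh
  have hsupp : (Function.support fun p ↦ f p.1 * g p.2 * h p) ⊆ Icc 0 abar ×ˢ Icc 0 ubar :=
    fun p hp ↦ (jointDensity_pos_iff hf hg p).1 <|
      (mul_nonneg (hf.nonneg _) (hg.nonneg _)).lt_of_ne' (left_ne_zero_of_mul hp)
  rw [integrable_typeMeasure_iff hf hg, ← integrableOn_iff_integrable_of_support_subset hsupp]
  exact hbox.integrableOn_compact (isCompact_Icc.prod isCompact_Icc)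

lemma integrable_typeMeasure_mul (hf : IsDensityOn f abar) (hg : IsDensityOn g ubar)
    {h : ℝ × ℝ → ℝ} (hh : ContinuousOn h (Icc 0 abar ×ˢ Icc 0 ubar)) {a : ℝ → ℝ → ℝ}
    (ha : Measurable (Function.uncurry a)) (ha1 : ∀ α u, |a α u| ≤ 1) :
    Integrable (fun p ↦ h p * a p.1 p.2) (typeMeasure f g) :=
  (integrable_typeMeasure_of_continuousOn hf hg hh).mul_bdd ha.aestronglyMeasurable
    (.of_forall fun p ↦ ha1 p.1 p.2)

end TypeMeasure

section Surplus

/-- The expected virtual revenue of the allocation `a` net of the cost of the inspection `c`; the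
budget constraint says that it vanishes. -/
def surplus (K : ℝ) (f g : ℝ → ℝ) (a c : ℝ → ℝ → ℝ) : ℝ :=
  ∫ p, (rFun g p.2 * a p.1 p.2 - K * c p.1 p.2) ∂typeMeasure f g

variable {f g : ℝ → ℝ} {abar ubar K : ℝ} {a c : ℝ → ℝ → ℝ}

lemma Feasible.abs_alloc_le_one (h : Feasible abar ubar K f g a c) (α u : ℝ) : |a α u| ≤ 1 :=
  abs_le.2 ⟨by linarith [(h.mem_a α u).1], (h.mem_a α u).2⟩

lemma Feasible.abs_inspect_le_one (h : Feasible abar ubar K f g a c) (α u : ℝ) :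
    |c α u| ≤ 1 :=
  abs_le.2 ⟨by linarith [(h.mem_c α u).1], (h.mem_c α u).2⟩

lemma Feasible.alloc_sub_le_inspect (h : Feasible abar ubar K f g a c) (α u : ℝ) :
    a α u - a 0 u ≤ c α u := by
  nlinarith [h.ic α u, (h.mem_a α u).2, (h.mem_c α u).1]

lemma integrable_rFun_mul (hf : IsDensityOn f abar) (hg : IsDensityOn g ubar)
    (ha : Measurable (Function.uncurry a)) (ha1 : ∀ α u, |a α u| ≤ 1) :
    Integrable (fun p ↦ rFun g p.2 * a p.1 p.2) (typeMeasure f g) :=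
  integrable_typeMeasure_mul hf hg
    (hg.continuousOn_rFun.comp continuousOn_snd fun _ hp ↦ hp.2) ha ha1

lemma integrable_inspection_cost (hf : IsDensityOn f abar) (hg : IsDensityOn g ubar) (K : ℝ)
    (hc : Measurable (Function.uncurry c)) (hc1 : ∀ α u, |c α u| ≤ 1) :
    Integrable (fun p ↦ K * c p.1 p.2) (typeMeasure f g) :=
  integrable_typeMeasure_mul hf hg continuousOn_const hc hc1

lemma integrable_surplus (hf : IsDensityOn f abar) (hg : IsDensityOn g ubar) (K : ℝ)
    (ha : Measurable (Function.uncurry a)) (ha1 : ∀ α u, |a α u| ≤ 1)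
    (hc : Measurable (Function.uncurry c)) (hc1 : ∀ α u, |c α u| ≤ 1) :
    Integrable (fun p ↦ rFun g p.2 * a p.1 p.2 - K * c p.1 p.2) (typeMeasure f g) :=
  (integrable_rFun_mul hf hg ha ha1).sub (integrable_inspection_cost hf hg K hc hc1)

lemma surplus_eq_zero_iff (hf : IsDensityOn f abar) (hg : IsDensityOn g ubar)
    (ha : Measurable (Function.uncurry a)) (ha1 : ∀ α u, |a α u| ≤ 1)
    (hc : Measurable (Function.uncurry c)) (hc1 : ∀ α u, |c α u| ≤ 1) :
    surplus K f g a c = 0 ↔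
      (∫ u in (0 : ℝ)..ubar, ∫ α in (0 : ℝ)..abar, f α * g u * rFun g u * a α u) =
        K * ∫ u in (0 : ℝ)..ubar, ∫ α in (0 : ℝ)..abar, f α * g u * c α u := by
  have hia := integrable_rFun_mul hf hg ha ha1
  have hic := integrable_inspection_cost hf hg K hc hc1
  have hrevenue := intervalIntegral_eq_integral_typeMeasure hf hg hia
  have hcost := intervalIntegral_eq_integral_typeMeasure hf hg hic
  simp only [← mul_assoc] at hrevenue
  simp only [mul_left_comm _ K, intervalIntegral.integral_const_mul] at hcost
  rw [surplus, integral_sub hia hic, sub_eq_zero, hrevenue, hcost]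

lemma J_eq_integral_typeMeasure (hf : IsDensityOn f abar) (hg : IsDensityOn g ubar) (v : ℝ)
    (ha : Measurable (Function.uncurry a)) (ha1 : ∀ α u, |a α u| ≤ 1) :
    J abar ubar v f g (fun α _ ↦ α) a =
      ∫ p, (min v p.1 - p.2) * a p.1 p.2 ∂typeMeasure f g := by
  rw [← intervalIntegral_eq_integral_typeMeasure hf hg
    (integrable_typeMeasure_mul hf hg (by fun_prop) ha ha1)]
  simp only [J, mul_assoc]

end Surplus

section Threshold

/-- The allocation that serves exactly the types `u` below the threshold `Φ α`. -/
def thresholdAlloc (Φ : ℝ → ℝ) (α u : ℝ) : ℝ := if u < Φ α then 1 else 0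

/-- The least inspection under which `thresholdAlloc Φ` is incentive compatible. -/
def thresholdInspect (Φ : ℝ → ℝ) (α u : ℝ) : ℝ := thresholdAlloc Φ α u - thresholdAlloc Φ 0 u

variable {f g Φ Ψ : ℝ → ℝ} {abar ubar K : ℝ} {a : ℝ → ℝ → ℝ}

lemma measurable_thresholdAlloc (hΦ : Measurable Φ) :
    Measurable (Function.uncurry (thresholdAlloc Φ)) :=
  .ite (measurableSet_lt measurable_snd (hΦ.comp measurable_fst)) measurable_const
    measurable_const

lemma measurable_thresholdInspect (hΦ : Measurable Φ) :
    Measurable (Function.uncurry (thresholdInspect Φ)) :=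
  (measurable_thresholdAlloc hΦ).sub
    (.ite (measurableSet_lt measurable_snd measurable_const) measurable_const measurable_const)

lemma thresholdAlloc_mem_Icc (Φ : ℝ → ℝ) (α u : ℝ) : thresholdAlloc Φ α u ∈ Icc (0 : ℝ) 1 := by
  unfold thresholdAlloc
  split_ifs <;> simp

lemma abs_thresholdAlloc_le_one (Φ : ℝ → ℝ) (α u : ℝ) : |thresholdAlloc Φ α u| ≤ 1 :=
  abs_le.2 ⟨by linarith [(thresholdAlloc_mem_Icc Φ α u).1], (thresholdAlloc_mem_Icc Φ α u).2⟩

lemma abs_thresholdInspect_le_one (Φ : ℝ → ℝ) (α u : ℝ) : |thresholdInspect Φ α u| ≤ 1 := by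
  obtain ⟨h0, h1⟩ := thresholdAlloc_mem_Icc Φ α u
  obtain ⟨h0', h1'⟩ := thresholdAlloc_mem_Icc Φ 0 u
  rw [thresholdInspect, abs_le]
  constructor <;> linarith

lemma thresholdAlloc_le_thresholdAlloc {α β u u' : ℝ} (h : Φ α ≤ Ψ β) (hu : u' ≤ u) :
    thresholdAlloc Φ α u ≤ thresholdAlloc Ψ β u' := by
  by_cases hα : u < Φ α
  · simp only [thresholdAlloc, if_pos hα, if_pos ((hu.trans_lt hα).trans_le h), le_refl]
  · simpa only [thresholdAlloc, if_neg hα] using (thresholdAlloc_mem_Icc Ψ β u').1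

lemma feasible_threshold (hf : IsDensityOn f abar) (hg : IsDensityOn g ubar) (hΦ : Measurable Φ)
    (hΦ0 : ∀ α, Φ 0 ≤ Φ α) (h : surplus K f g (thresholdAlloc Φ) (thresholdInspect Φ) = 0) :
    Feasible abar ubar K f g (thresholdAlloc Φ) (thresholdInspect Φ) where
  meas_a := measurable_thresholdAlloc hΦ
  meas_c := measurable_thresholdInspect hΦ
  mem_a := thresholdAlloc_mem_Icc Φ
  mem_c α u := ⟨sub_nonneg.2 (thresholdAlloc_le_thresholdAlloc (hΦ0 α) le_rfl),
    (le_abs_self _).trans (abs_thresholdInspect_le_one Φ α u)⟩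
  budget := (surplus_eq_zero_iff hf hg (measurable_thresholdAlloc hΦ)
    (abs_thresholdAlloc_le_one Φ) (measurable_thresholdInspect hΦ)
    (abs_thresholdInspect_le_one Φ)).1 h
  ic α u := by
    simp only [thresholdInspect, thresholdAlloc]
    split_ifs <;> norm_num
  inspect α u := sub_le_self _ (thresholdAlloc_mem_Icc Φ 0 u).1
  u_mono α _ _ hu := thresholdAlloc_le_thresholdAlloc le_rfl hu
  α_mono0 α u := thresholdAlloc_le_thresholdAlloc (hΦ0 α) le_rfl

lemma continuousAt_thresholdAlloc {Φ : ℝ → ℝ → ℝ} {α u ε : ℝ}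
    (hΦ : ContinuousAt (fun e ↦ Φ e α) ε) (hu : u ≠ Φ ε α) :
    ContinuousAt (fun e ↦ thresholdAlloc (Φ e) α u) ε := by
  rcases hu.lt_or_gt with h | h
  · exact continuousAt_const.congr <|
      (hΦ.eventually_const_lt h).mono fun e he ↦ (if_pos he).symm
  · exact continuousAt_const.congr <|
      (hΦ.eventually_lt_const h).mono fun e he ↦ (if_neg he.not_gt).symm

lemma continuous_surplus_threshold (hf : IsDensityOn f abar) (hg : IsDensityOn g ubar) (K : ℝ)
    {Φ : ℝ → ℝ → ℝ} (hΦ : ∀ ε, Measurable (Φ ε)) (hcont : ∀ α, Continuous fun ε ↦ Φ ε α) :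
    Continuous fun ε ↦ surplus K f g (thresholdAlloc (Φ ε)) (thresholdInspect (Φ ε)) := by
  refine continuous_iff_continuousAt.2 fun ε ↦ continuousAt_of_dominated
    (bound := fun p ↦ |rFun g p.2| + |K|) (.of_forall fun e ↦ ?_)
    (.of_forall fun e ↦ .of_forall fun p ↦ ?_) ?_ ?_
  · exact (integrable_surplus hf hg K (measurable_thresholdAlloc (hΦ e))
      (abs_thresholdAlloc_le_one _) (measurable_thresholdInspect (hΦ e))
      (abs_thresholdInspect_le_one _)).aestronglyMeasurable
  · refine (abs_sub _ _).trans (add_le_add ?_ ?_) <;> rw [abs_mul]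
    · exact mul_le_of_le_one_right (abs_nonneg _) (abs_thresholdAlloc_le_one _ _ _)
    · exact mul_le_of_le_one_right (abs_nonneg _) (abs_thresholdInspect_le_one _ _ _)
  · exact integrable_typeMeasure_of_continuousOn hf hg <|
      (hg.continuousOn_rFun.comp continuousOn_snd fun _ hp ↦ hp.2).abs.add continuousOn_const
  · filter_upwards [ae_snd_ne_comp_fst (hΦ ε),
      ae_snd_ne_comp_fst (measurable_const (a := Φ ε 0))] with p hp hp0
    have hα := continuousAt_thresholdAlloc (hcont p.1).continuousAt hp
    have h0 := continuousAt_thresholdAlloc (hcont 0).continuousAt hp0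
    exact (hα.const_mul _).sub ((hα.sub h0).const_mul _)

lemma exists_threshold_lt (hf : IsDensityOn f abar) (hg : IsDensityOn g ubar) (hΦ : Continuous Φ)
    {P : ℝ × ℝ → Prop} (hP : ∀ᵐ p ∂typeMeasure f g, P p) {u : ℝ} (hu : u ∈ Ioc 0 ubar)
    (hΦu : Φ 0 < u) : ∃ p, P p ∧ Φ p.1 < p.2 ∧ p.2 < u := by
  let U : Set (ℝ × ℝ) := Ioo 0 abar ×ˢ Ioo 0 ubar ∩ {p | Φ p.1 < p.2 ∧ p.2 < u}
  have hU : IsOpen U := (isOpen_Ioo.prod isOpen_Ioo).inter <|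
    (isOpen_lt (hΦ.comp continuous_fst) continuous_snd).inter
      (isOpen_lt continuous_snd continuous_const)
  have hne : U.Nonempty := by
    obtain ⟨w, hw, hwu⟩ := exists_between (max_lt hΦu hu.1)
    obtain ⟨hΦw, hw0⟩ := max_lt_iff.1 hw
    have hnear : ∀ᶠ α in nhdsWithin 0 (Ioi 0), Φ α < w :=
      nhdsWithin_le_nhds (hΦ.continuousAt.eventually_lt_const hΦw)
    obtain ⟨α, hαw, hα⟩ := (hnear.and (Ioo_mem_nhdsGT hf.right_pos)).exists
    exact ⟨(α, w), ⟨hα, hw0, hwu.trans_le hu.2⟩, hαw, hwu⟩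
  obtain ⟨p, ⟨hbox, hp⟩, hPp⟩ :=
    (Measure.dense_of_ae ((ae_typeMeasure_iff hf hg).1 hP)).inter_open_nonempty U hU hne
  exact ⟨p, hPp ⟨Ioo_subset_Icc_self hbox.1, Ioo_subset_Icc_self hbox.2⟩, hp⟩

lemma ae_alloc_zero_le_threshold (hf : IsDensityOn f abar) (hg : IsDensityOn g ubar)
    (hΦ : Continuous Φ) (ha1 : ∀ u, a 0 u ≤ 1) (hanti : ∀ α, Antitone (a α))
    (ha0 : ∀ α u, a 0 u ≤ a α u)
    (ha : ∀ᵐ p ∂typeMeasure f g, a p.1 p.2 = thresholdAlloc Φ p.1 p.2) :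
    ∀ᵐ p ∂typeMeasure f g, a 0 p.2 ≤ thresholdAlloc Φ 0 p.2 := by
  filter_upwards [ae_typeMeasure_mem hf hg, ae_snd_ne_comp_fst (measurable_const (a := 0)),
    ae_snd_ne_comp_fst (measurable_const (a := Φ 0))] with p hp hp0 hpΦ
  rcases hpΦ.lt_or_gt with hlt | hgt
  · simpa only [thresholdAlloc, if_pos hlt] using ha1 p.2
  · obtain ⟨⟨α, w⟩, haw, hαw, hwp⟩ :=
      exists_threshold_lt hf hg hΦ ha ⟨hp.2.1.lt_of_ne' hp0, hp.2.2⟩ hgt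
    calc
      a 0 p.2 ≤ a α p.2 := ha0 α p.2
      _ ≤ a α w := hanti α hwp.le
      _ = 0 := haw.trans (if_neg hαw.not_gt)
      _ = thresholdAlloc Φ 0 p.2 := (if_neg hgt.not_gt).symm

end Threshold

section EfficientThreshold

/-- The threshold of the allocation that serves a type exactly when its net value `min v α - u` is
positive, extended by `0` to `α < 0`. -/
def efficientThreshold (v α : ℝ) : ℝ := max 0 (min v α)

variable {f g : ℝ → ℝ} {abar ubar v K : ℝ}

lemma continuous_efficientThreshold (v : ℝ) : Continuous (efficientThreshold v) := by
  unfold efficientThreshold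
  fun_prop

lemma integral_efficient_alloc (hf : IsDensityOn f abar) {u : ℝ} (hu : 0 ≤ u) :
    ∫ α, f α * thresholdAlloc (efficientThreshold v) α u = if u < v then 1 - CDF f u else 0 := by
  have halloc (α : ℝ) : f α * thresholdAlloc (efficientThreshold v) α u =
      if u < v then (Ioi u).indicator f α else 0 := by
    simp only [thresholdAlloc, efficientThreshold, lt_max_iff, lt_min_iff, hu.not_gt, false_or,
      indicator_apply, mem_Ioi]
    split_ifs <;> simp_all
  simp only [halloc]
  split_ifs
  · rw [integral_indicator measurableSet_Ioi, hf.integral_Ioi]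
  · exact integral_zero _ _

lemma integral_efficient_surplus (hf : IsDensityOn f abar) (hg : IsDensityOn g ubar) (u : ℝ) :
    ∫ α, f α * g u * (rFun g u * thresholdAlloc (efficientThreshold v) α u -
        K * thresholdAlloc (efficientThreshold v) α u) =
      (Ico 0 v).indicator
        (fun u ↦ (1 - CDF f u) * (1 - CDF g u - u * g u) - K * ((1 - CDF f u) * g u)) u := by
  have hfactor (x α : ℝ) : f α * g u * (rFun g u * x - K * x) =
      (g u * rFun g u - K * g u) * (f α * x) := by ring
  simp only [hfactor, integral_const_mul]
  rcases le_or_gt 0 u with hu | hu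
  · simp only [integral_efficient_alloc hf hu, hg.mul_rFun hu, indicator_apply, mem_Ico, hu,
      true_and, mul_ite, mul_zero]
    congr 1
    ring
  · simp [hg.supp u fun h ↦ hu.not_ge h.1, hu.not_ge]

lemma surplus_efficient (hf : IsDensityOn f abar) (hg : IsDensityOn g ubar) (hv : 0 < v) :
    surplus K f g (thresholdAlloc (efficientThreshold v))
        (thresholdInspect (efficientThreshold v)) =
      (∫ u in (0 : ℝ)..v, (1 - CDF f u) * (1 - CDF g u - u * g u)) -
        K * ∫ u in (0 : ℝ)..v, (1 - CDF f u) * g u := by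
  have hinspect (p : ℝ × ℝ) (hp : p ∈ Icc 0 abar ×ˢ Icc 0 ubar) :
      rFun g p.2 * thresholdAlloc (efficientThreshold v) p.1 p.2 -
          K * thresholdInspect (efficientThreshold v) p.1 p.2 =
        rFun g p.2 * thresholdAlloc (efficientThreshold v) p.1 p.2 -
          K * thresholdAlloc (efficientThreshold v) p.1 p.2 := by
    have h0 : thresholdAlloc (efficientThreshold v) 0 p.2 = 0 := by
      simp [thresholdAlloc, efficientThreshold, hv.le, hp.2.1]
    rw [thresholdInspect, h0, sub_zero]
  have hA := measurable_thresholdAlloc (continuous_efficientThreshold v).measurable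
  have hA1 := abs_thresholdAlloc_le_one (efficientThreshold v)
  rw [surplus, integral_congr_ae ((ae_typeMeasure_mem hf hg).mono hinspect),
    integral_typeMeasure hf hg (integrable_surplus hf hg K hA hA1 hA hA1)]
  simp only [integral_efficient_surplus hf hg]
  rw [integral_indicator measurableSet_Ico, integral_Ico_eq_integral_Ioc,
    ← intervalIntegral.integral_of_le hv.le,
    intervalIntegral.integral_sub (intervalIntegrable_marginalRevenue hf hg 0 v)
      ((intervalIntegrable_one_sub_cdf_mul hf hg 0 v).const_mul K),
    intervalIntegral.integral_const_mul]

lemma surplus_efficient_nonpos (hf : IsDensityOn f abar) (hg : IsDensityOn g ubar) (hv : 0 < v)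
    (hK : Klow f g (fun u ↦ u) v ≤ K) :
    surplus K f g (thresholdAlloc (efficientThreshold v))
      (thresholdInspect (efficientThreshold v)) ≤ 0 := by
  rw [surplus_efficient hf hg hv, sub_nonpos]
  exact (Klow_le_iff hf hg hv).1 hK

end EfficientThreshold

section Optimality

variable {f g Φ Ψ : ℝ → ℝ} {abar ubar v K : ℝ} {a c : ℝ → ℝ → ℝ}

/-- The threshold at stage `ε` of the linear motion from `Φ` to the efficient threshold. -/
def thresholdPath (v : ℝ) (Φ : ℝ → ℝ) (ε α : ℝ) : ℝ :=
  AffineMap.lineMap (Φ α) (efficientThreshold v α) ε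

lemma continuous_thresholdPath (v : ℝ) (hΦ : Continuous Φ) (ε : ℝ) :
    Continuous (thresholdPath v Φ ε) := by
  have := continuous_efficientThreshold v
  unfold thresholdPath
  fun_prop

lemma thresholdPath_zero_le (hv : 0 ≤ v) (hΦ0 : ∀ α, Φ 0 ≤ Φ α) {ε : ℝ} (hε : ε ∈ Icc 0 1)
    (α : ℝ) : thresholdPath v Φ ε 0 ≤ thresholdPath v Φ ε α := by
  have h0 : efficientThreshold v 0 ≤ efficientThreshold v α := by simp [efficientThreshold, hv]
  exact lineMap_mono_endpoints (hΦ0 α) h0 hε.1 hε.2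

lemma thresholdPath_mem_uIcc (hv : 0 ≤ v) {ε α : ℝ} (hε : ε ∈ Icc 0 1) (hα : 0 ≤ α) :
    thresholdPath v Φ ε α ∈ uIcc (Φ α) (min v α) := by
  have heff : efficientThreshold v α = min v α := max_eq_right (le_min hv hα)
  rw [thresholdPath, heff, ← segment_eq_uIcc]
  exact lineMap_mem_segment ℝ _ _ hε

lemma welfare_le_of_mem_uIcc {α u m : ℝ} (h : Ψ α ∈ uIcc (Φ α) m) :
    (m - u) * thresholdAlloc Φ α u ≤ (m - u) * thresholdAlloc Ψ α u := by
  simp only [thresholdAlloc]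
  rcases mem_uIcc.1 h with h | h <;> split_ifs <;> linarith

lemma ae_eq_thresholdAlloc_of_J_le (hf : IsDensityOn f abar) (hg : IsDensityOn g ubar)
    (ha : Measurable (Function.uncurry a)) (ha1 : ∀ α u, |a α u| ≤ 1)
    (haΦ : ∀ᵐ p ∂typeMeasure f g, a p.1 p.2 = thresholdAlloc Φ p.1 p.2) (hΨ : Measurable Ψ)
    (hΦΨ : ∀ α, 0 ≤ α → Ψ α ∈ uIcc (Φ α) (min v α))
    (hJ : J abar ubar v f g (fun α _ ↦ α) (thresholdAlloc Ψ) ≤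
      J abar ubar v f g (fun α _ ↦ α) a) :
    ∀ᵐ p ∂typeMeasure f g, a p.1 p.2 = thresholdAlloc Ψ p.1 p.2 := by
  have hΨm := measurable_thresholdAlloc hΨ
  have hΨ1 := abs_thresholdAlloc_le_one Ψ
  have hle : ∀ᵐ p ∂typeMeasure f g,
      (min v p.1 - p.2) * a p.1 p.2 ≤ (min v p.1 - p.2) * thresholdAlloc Ψ p.1 p.2 := by
    filter_upwards [ae_typeMeasure_mem hf hg, haΦ] with p hp hpa
    exact hpa ▸ welfare_le_of_mem_uIcc (hΦΨ p.1 hp.1.1)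
  have hia : Integrable (fun p ↦ (min v p.1 - p.2) * a p.1 p.2) (typeMeasure f g) :=
    integrable_typeMeasure_mul hf hg (by fun_prop) ha ha1
  have hiΨ : Integrable (fun p ↦ (min v p.1 - p.2) * thresholdAlloc Ψ p.1 p.2)
      (typeMeasure f g) := integrable_typeMeasure_mul hf hg (by fun_prop) hΨm hΨ1
  rw [J_eq_integral_typeMeasure hf hg v hΨm hΨ1, J_eq_integral_typeMeasure hf hg v ha ha1] at hJ
  have heq := (integral_eq_iff_of_ae_le hia hiΨ hle).1 (hJ.antisymm' (integral_mono_ae hia hiΨ hle))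
  filter_upwards [heq, ae_snd_ne_comp_fst (Φ := min v) (by fun_prop)] with p hp hpv
  exact mul_left_cancel₀ (sub_ne_zero.2 hpv.symm) hp

lemma surplus_threshold_le_of_ae_eq (hf : IsDensityOn f abar) (hg : IsDensityOn g ubar)
    (hK : 0 ≤ K) (hΦ : Measurable Φ) (hΦ0 : ∀ α, Φ 0 ≤ Φ α) (hΨ : Continuous Ψ)
    (h : ∀ᵐ p ∂typeMeasure f g, thresholdAlloc Φ p.1 p.2 = thresholdAlloc Ψ p.1 p.2) :
    surplus K f g (thresholdAlloc Φ) (thresholdInspect Φ) ≤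
      surplus K f g (thresholdAlloc Ψ) (thresholdInspect Ψ) := by
  have hzero := ae_alloc_zero_le_threshold hf hg hΨ (fun u ↦ (thresholdAlloc_mem_Icc Φ 0 u).2)
    (fun _ _ _ hu ↦ thresholdAlloc_le_thresholdAlloc le_rfl hu)
    (fun α _ ↦ thresholdAlloc_le_thresholdAlloc (hΦ0 α) le_rfl) h
  refine integral_mono_ae
    (integrable_surplus hf hg K (measurable_thresholdAlloc hΦ) (abs_thresholdAlloc_le_one Φ)
      (measurable_thresholdInspect hΦ) (abs_thresholdInspect_le_one Φ))
    (integrable_surplus hf hg K (measurable_thresholdAlloc hΨ.measurable)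
      (abs_thresholdAlloc_le_one Ψ) (measurable_thresholdInspect hΨ.measurable)
      (abs_thresholdInspect_le_one Ψ)) ?_
  filter_upwards [h, hzero] with p hp hp0
  simp only [thresholdInspect, hp]
  gcongr

lemma surplus_threshold_nonpos_of_optimal (hf : IsDensityOn f abar) (hg : IsDensityOn g ubar)
    (hv : 0 < v) (hK : Klow f g (fun u ↦ u) v ≤ K)
    (hopt : Optimal abar ubar v K f g (fun α _ ↦ α) a c) (hΦ : Continuous Φ)
    (hΦ0 : ∀ α, Φ 0 ≤ Φ α)
    (ha : ∀ᵐ p ∂typeMeasure f g, a p.1 p.2 = thresholdAlloc Φ p.1 p.2) :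
    surplus K f g (thresholdAlloc Φ) (thresholdInspect Φ) ≤ 0 := by
  by_contra! hpos
  have hK0 : 0 ≤ K := (Klow_pos hf hg hv).le.trans hK
  have hcont := continuous_surplus_threshold hf hg K (Φ := thresholdPath v Φ)
    (fun ε ↦ (continuous_thresholdPath v hΦ ε).measurable)
    (fun α ↦ AffineMap.lineMap_continuous)
  have hstart : thresholdPath v Φ 0 = Φ := funext fun _ ↦ AffineMap.lineMap_apply_zero _ _
  have hend : thresholdPath v Φ 1 = efficientThreshold v :=
    funext fun _ ↦ AffineMap.lineMap_apply_one _ _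
  obtain ⟨ε, hε, hbalanced⟩ := intermediate_value_Icc' zero_le_one hcont.continuousOn
    ⟨by simpa only [hend] using surplus_efficient_nonpos hf hg hv hK,
      by simpa only [hstart] using hpos.le⟩
  let Ψ := thresholdPath v Φ ε
  have hΨ : Continuous Ψ := continuous_thresholdPath v hΦ ε
  have hfeasible : Feasible abar ubar K f g (thresholdAlloc Ψ) (thresholdInspect Ψ) :=
    feasible_threshold hf hg hΨ.measurable (thresholdPath_zero_le hv.le hΦ0 hε) hbalanced
  have hsame := ae_eq_thresholdAlloc_of_J_le hf hg hopt.1.meas_a hopt.1.abs_alloc_le_one ha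
    hΨ.measurable (fun α ↦ thresholdPath_mem_uIcc hv.le hε) (hopt.2 _ _ hfeasible)
  have hle := surplus_threshold_le_of_ae_eq hf hg hK0 hΦ.measurable hΦ0 hΨ <| by
    filter_upwards [ha, hsame] with p hp hp'
    exact hp.symm.trans hp'
  exact hpos.not_ge (hle.trans_eq hbalanced)

lemma Feasible.ae_thresholdInspect_le (hf : IsDensityOn f abar) (hg : IsDensityOn g ubar)
    (h : Feasible abar ubar K f g a c) (hΦ : Continuous Φ)
    (ha : ∀ᵐ p ∂typeMeasure f g, a p.1 p.2 = thresholdAlloc Φ p.1 p.2) :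
    ∀ᵐ p ∂typeMeasure f g, thresholdInspect Φ p.1 p.2 ≤ c p.1 p.2 := by
  have hzero := ae_alloc_zero_le_threshold hf hg hΦ (fun u ↦ (h.mem_a 0 u).2)
    (fun α _ _ hu ↦ h.u_mono α _ _ hu) h.α_mono0 ha
  filter_upwards [ha, hzero] with p hp hp0
  calc
    thresholdInspect Φ p.1 p.2 ≤ a p.1 p.2 - a 0 p.2 := sub_le_sub hp.ge hp0
    _ ≤ c p.1 p.2 := h.alloc_sub_le_inspect p.1 p.2

lemma Feasible.ae_eq_thresholdInspect (hf : IsDensityOn f abar) (hg : IsDensityOn g ubar)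
    (hK : 0 < K) (h : Feasible abar ubar K f g a c) (hΦ : Continuous Φ)
    (ha : ∀ᵐ p ∂typeMeasure f g, a p.1 p.2 = thresholdAlloc Φ p.1 p.2)
    (hsurplus : surplus K f g (thresholdAlloc Φ) (thresholdInspect Φ) ≤ 0) :
    ∀ᵐ p ∂typeMeasure f g, c p.1 p.2 = thresholdInspect Φ p.1 p.2 := by
  have hbudget : surplus K f g a c = 0 := (surplus_eq_zero_iff hf hg h.meas_a h.abs_alloc_le_one
    h.meas_c h.abs_inspect_le_one).2 h.budget
  have hle : ∀ᵐ p ∂typeMeasure f g, rFun g p.2 * a p.1 p.2 - K * c p.1 p.2 ≤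
      rFun g p.2 * thresholdAlloc Φ p.1 p.2 - K * thresholdInspect Φ p.1 p.2 := by
    filter_upwards [ha, h.ae_thresholdInspect_le hf hg hΦ ha] with p hp hpc
    rw [hp]
    gcongr
  have hi := integrable_surplus hf hg K h.meas_a h.abs_alloc_le_one h.meas_c
    h.abs_inspect_le_one
  have hiΦ := integrable_surplus hf hg K (measurable_thresholdAlloc hΦ.measurable)
    (abs_thresholdAlloc_le_one Φ) (measurable_thresholdInspect hΦ.measurable)
    (abs_thresholdInspect_le_one Φ)
  have heq := (integral_eq_iff_of_ae_le hi hiΦ hle).1 <|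
    (integral_mono_ae hi hiΦ hle).antisymm (hsurplus.trans_eq hbudget.symm)
  filter_upwards [ha, heq] with p hp hpeq
  simp only [hp] at hpeq
  exact mul_left_cancel₀ hK.ne' (sub_right_injective hpeq)

end Optimality

section IndependentInterference

variable {f g : ℝ → ℝ} {abar ubar v K ubot utop : ℝ} {a c : ℝ → ℝ → ℝ}

lemma phiInd_eq_max_min (h : ubot ≤ utop) (α : ℝ) :
    phiInd v ubot utop α = max ubot (min utop (α - (v - utop))) := by
  grind [phiInd]

lemma continuous_phiInd (h : ubot ≤ utop) : Continuous (phiInd v ubot utop) := by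
  simp only [funext (phiInd_eq_max_min h)]
  fun_prop

lemma le_phiInd (h : ubot ≤ utop) (α : ℝ) : ubot ≤ phiInd v ubot utop α :=
  (le_max_left _ _).trans_eq (phiInd_eq_max_min h α).symm

lemma phiInd_zero (h0 : 0 ≤ ubot) (h : ubot ≤ utop) (hv : utop ≤ v) :
    phiInd v ubot utop 0 = ubot := by
  rw [phiInd_eq_max_min h]
  exact max_eq_left ((min_le_right _ _).trans (by linarith))

lemma lt_psiInd_iff (h0 : 0 ≤ ubot) {α u : ℝ} (hu : ubot < u) :
    u < psiInd v ubot utop α ↔ u < phiInd v ubot utop α := by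
  unfold psiInd phiInd
  split_ifs <;> grind

lemma thresholdInspect_phiInd (h0 : 0 ≤ ubot) (h : ubot ≤ utop) (hv : utop ≤ v) {u : ℝ}
    (hu : u ≠ ubot) (α : ℝ) : thresholdInspect (phiInd v ubot utop) α u =
      if ubot < u ∧ u < psiInd v ubot utop α then 1 else 0 := by
  simp only [thresholdInspect, thresholdAlloc, phiInd_zero h0 h hv]
  rcases hu.lt_or_gt with hlt | hgt
  · simp [hlt, hlt.trans_le (le_phiInd h α), hlt.not_gt]
  · simp [hgt, hgt.not_gt, lt_psiInd_iff h0 hgt]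

theorem inspection_threshold_independent_general (hv : 0 < v) (hf : IsDensityOn f abar)
    (hg : IsDensityOn g ubar) (hK : Klow f g (fun u ↦ u) v ≤ K)
    (hopt : Optimal abar ubar v K f g (fun α _ ↦ α) a c)
    (h1 : 0 ≤ ubot) (h2 : ubot ≤ utop) (h3 : utop ≤ v)
    (halloc : ∀ᵐ p : ℝ × ℝ, p ∈ Icc 0 abar ×ˢ Icc 0 ubar →
      (p.2 < phiInd v ubot utop p.1 → a p.1 p.2 = 1) ∧
      (phiInd v ubot utop p.1 < p.2 → a p.1 p.2 = 0)) :
    ∀ᵐ p : ℝ × ℝ, p ∈ Icc 0 abar ×ˢ Icc 0 ubar →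
      (ubot < p.2 ∧ p.2 < psiInd v ubot utop p.1 → c p.1 p.2 = 1) ∧
      (¬(ubot < p.2 ∧ p.2 < psiInd v ubot utop p.1) → c p.1 p.2 = 0) := by
  rw [← ae_typeMeasure_iff hf hg] at halloc ⊢
  have hφ : Continuous (phiInd v ubot utop) := continuous_phiInd h2
  have hφ0 (α : ℝ) : phiInd v ubot utop 0 ≤ phiInd v ubot utop α :=
    (phiInd_zero h1 h2 h3).trans_le (le_phiInd h2 α)
  have ha : ∀ᵐ p ∂typeMeasure f g, a p.1 p.2 = thresholdAlloc (phiInd v ubot utop) p.1 p.2 := by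
    filter_upwards [halloc, ae_snd_ne_comp_fst hφ.measurable] with p hp hne
    rcases hne.lt_or_gt with hlt | hgt
    · exact (hp.1 hlt).trans (if_pos hlt).symm
    · exact (hp.2 hgt).trans (if_neg hgt.not_gt).symm
  have hsurplus := surplus_threshold_nonpos_of_optimal hf hg hv hK hopt hφ hφ0 ha
  have hc := hopt.1.ae_eq_thresholdInspect hf hg ((Klow_pos hf hg hv).trans_le hK) hφ ha hsurplus
  filter_upwards [hc, ae_snd_ne_comp_fst (measurable_const (a := ubot))] with p hp hne
  rw [hp, thresholdInspect_phiInd h1 h2 h3 hne]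
  exact ⟨fun h ↦ if_pos h, fun h ↦ if_neg h⟩

end IndependentInterference

/-- in the independent case, given the allocation-threshold constants
`u_bot ≤ u_top`, the optimal inspection rule is, almost everywhere, `c° = 1` on
`u_bot < u < ψ(α)` and `c° = 0` otherwise. -/
theorem inspection_threshold_independent
    (abar ubar v K : ℝ) (habar : 0 < abar) (hubar : 0 < ubar) (hv : 0 < v) (hK0 : 0 ≤ K)
    (f g : ℝ → ℝ)
    (hf : IsDensityOn f abar) (hg : IsDensityOn g ubar)
    (hr : StrictAntiOn (rFun g) (Icc 0 ubar))
    (hK : Klow f g (fun u => u) v ≤ K)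
    (a c : ℝ → ℝ → ℝ)
    (hopt : Optimal abar ubar v K f g (fun α _ => α) a c)
    (ubot utop : ℝ) (h1 : 0 ≤ ubot) (h2 : ubot ≤ utop) (h3 : utop ≤ v)
    (halloc : ∀ᵐ p : ℝ × ℝ ∂volume, p ∈ Icc (0:ℝ) abar ×ˢ Icc (0:ℝ) ubar →
      (p.2 < phiInd v ubot utop p.1 → a p.1 p.2 = 1) ∧
      (phiInd v ubot utop p.1 < p.2 → a p.1 p.2 = 0)) :
    ∀ᵐ p : ℝ × ℝ ∂volume, p ∈ Icc (0:ℝ) abar ×ˢ Icc (0:ℝ) ubar →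
      (ubot < p.2 ∧ p.2 < psiInd v ubot utop p.1 → c p.1 p.2 = 1) ∧
      (¬ (ubot < p.2 ∧ p.2 < psiInd v ubot utop p.1) → c p.1 p.2 = 0) :=
  inspection_threshold_independent_general hv hf hg hK hopt h1 h2 h3 halloc

end Spectrum
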